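/- Iarrobino symmetry: let (A, 𝔪) be a finite local Gorenstein k-algebra of socle degree j. Then for all m ≥ 0 and n ≥ 1, dim_k Q_{m,n} = dim_k Q_{n−1,m+1}; equivalently, the rows of the Hilbert function decomposition satisfy Δ_s(t) = Δ_s((j−s)−t) for all s and t, i.e. each Δ_s is symmetric about (j−s)/2. -/

import Mathlib

/-- `dim_k P/(P ∩ Q)`, the `k`-dimension of the image of the submodule `P` in `A/Q`. -/
noncomputable def subquotDim (k : Type*) {A : Type*} [Field k] [CommRing A] [Algebra k A]
    (P Q : Submodule A A) : ℕ :=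
  Module.finrank k (↥(P.restrictScalars k) ⧸
    (Submodule.comap (P.restrictScalars k).subtype (Q.restrictScalars k)))

/-- Iarrobino's `A_{m,n} = J^m ∩ (0 : J^n)`, with the convention `J^i = A` for `i ≤ 0`. -/
noncomputable def iaA {A : Type*} [CommRing A] (J : Ideal A) (m : ℕ) (n : ℤ) : Ideal A :=
  J ^ m ⊓ Submodule.torsionBySet A A ((J ^ n.toNat : Ideal A) : Set A)

/-- `dim_k Q_{m,n}` where `Q_{m,n} = A_{m,n}/(A_{m+1,n} + A_{m,n-1})`. -/
noncomputable def iaQdim (k : Type*) {A : Type*} [Field k] [CommRing A] [Algebra k A]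
    (J : Ideal A) (m : ℕ) (n : ℤ) : ℕ :=
  subquotDim k (iaA J m n) (iaA J (m + 1) n ⊔ iaA J m (n - 1))

/-- The Hilbert function decomposition `Δ_s(t) = dim_k Q_{t, j+1-(s+t)}` for `0 ≤ s ≤ j`,
`0 ≤ t ≤ j - s`, and `Δ_s(t) = 0` otherwise. -/
noncomputable def iaDelta (k : Type*) {A : Type*} [Field k] [CommRing A] [Algebra k A]
    (J : Ideal A) (j s t : ℕ) : ℕ :=
  if s ≤ j ∧ s + t ≤ j then iaQdim k J t ((j : ℤ) + 1 - (s + t)) else 0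

/-- The local Hilbert function `h(t) = dim_k J^t/J^(t+1)`. -/
noncomputable def hilbFn (k : Type*) {A : Type*} [Field k] [CommRing A] [Algebra k A]
    (J : Ideal A) (t : ℕ) : ℕ :=
  subquotDim k (J ^ t) (J ^ (t + 1))

/-!
If the socle of `A` is a line, a functional `φ` not vanishing on it makes `(a, b) ↦ φ (a * b)`
nondegenerate, and then `0 : I` is the orthogonal `Iᗮ` of every ideal `I`. The pairing restricted
to `U × W` has left and right kernels `U ∩ Wᗮ` and `W ∩ Uᗮ`, and its rank gives
`dim (U ∩ Wᗮ) + dim W = dim (W ∩ Uᗮ) + dim U`. Hence `dim A_{a,b} - dim A_{b,a}` equals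
`dim 𝔪^a - dim 𝔪^b`, and these differences cancel when `m` and `n` are exchanged in
`dim Q_{m,n+1} = dim A_{m,n+1} - dim A_{m+1,n+1} - dim A_{m,n} + dim A_{m+1,n}`.
-/

section Lattice

variable {K V : Type*} [DivisionRing K] [AddCommGroup V] [Module K V]

theorem finrank_quotient_comap_subtype_add_finrank {P Q : Submodule K V} [FiniteDimensional K P]
    (hQP : Q ≤ P) :
    Module.finrank K (P ⧸ Q.comap P.subtype) + Module.finrank K Q = Module.finrank K P := by
  rw [← (Submodule.comapSubtypeEquivOfLe hQP).finrank_eq]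
  exact Submodule.finrank_quotient_add_finrank _

theorem finrank_inf_quotient_sup_add {U' U N N' : Submodule K V} [FiniteDimensional K U]
    (hU : U' ≤ U) (hN : N ≤ N') :
    Module.finrank K (↥(U ⊓ N') ⧸ (U' ⊓ N' ⊔ U ⊓ N).comap (U ⊓ N').subtype) +
        Module.finrank K ↥(U' ⊓ N') + Module.finrank K ↥(U ⊓ N) =
      Module.finrank K ↥(U ⊓ N') + Module.finrank K ↥(U' ⊓ N) := by
  have : FiniteDimensional K U' := Submodule.finiteDimensional_of_le hU
  have hle : U' ⊓ N' ⊔ U ⊓ N ≤ U ⊓ N' :=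
    sup_le (inf_le_inf_right N' hU) (inf_le_inf_left U hN)
  have hinf : U' ⊓ N' ⊓ (U ⊓ N) = U' ⊓ N := by
    rw [inf_inf_inf_comm, inf_eq_left.2 hU, inf_eq_right.2 hN]
  have hsup := Submodule.finrank_sup_add_finrank_inf_eq (U' ⊓ N') (U ⊓ N)
  rw [hinf] at hsup
  rw [← finrank_quotient_comap_subtype_add_finrank hle, add_assoc, ← hsup, add_assoc]

end Lattice

section Orthogonal

variable {k V W : Type*} [Field k] [AddCommGroup V] [Module k V] [AddCommGroup W] [Module k W]

theorem finrank_ker_add_finrank_eq_finrank_ker_flip_add_finrank [FiniteDimensional k V]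
    [FiniteDimensional k W] (B : V →ₗ[k] W →ₗ[k] k) :
    Module.finrank k (LinearMap.ker B) + Module.finrank k W =
      Module.finrank k (LinearMap.ker B.flip) + Module.finrank k V := by
  have hker : (LinearMap.range B).dualCoannihilator = LinearMap.ker B.flip :=
    LinearMap.dualCoannihilator_range_eq_ker_flip B
  rw [← Subspace.finrank_add_finrank_dualCoannihilator_eq (LinearMap.range B), hker,
    ← LinearMap.finrank_range_add_finrank_ker B]
  ring

variable {B : LinearMap.BilinForm k V}

theorem map_subtype_ker_domRestrict₁₂ (hB : B.IsRefl) (P Q : Submodule k V) :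
    (LinearMap.ker (B.domRestrict₁₂ P Q)).map P.subtype = P ⊓ B.orthogonal Q := by
  ext x
  simp [LinearMap.ext_iff, LinearMap.domRestrict₁₂_apply, hB.eq_iff (x := x), and_comm]

theorem finrank_inf_orthogonal_add_finrank (hB : B.IsRefl) (P Q : Submodule k V)
    [FiniteDimensional k P] [FiniteDimensional k Q] :
    Module.finrank k ↥(P ⊓ B.orthogonal Q) + Module.finrank k Q =
      Module.finrank k ↥(Q ⊓ B.orthogonal P) + Module.finrank k P := by
  have hflip : LinearMap.ker (B.domRestrict₁₂ P Q).flip = LinearMap.ker (B.domRestrict₁₂ Q P) := by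
    ext x
    simp [LinearMap.ext_iff, LinearMap.domRestrict₁₂_apply, hB.eq_iff (x := (x : V))]
  rw [← map_subtype_ker_domRestrict₁₂ hB P Q, ← map_subtype_ker_domRestrict₁₂ hB Q P,
    Submodule.finrank_map_subtype_eq, Submodule.finrank_map_subtype_eq, ← hflip]
  exact finrank_ker_add_finrank_eq_finrank_ker_flip_add_finrank _

theorem finrank_inf_orthogonal_quotient_comm (hB : B.IsRefl) {P' P Q' Q : Submodule k V}
    [FiniteDimensional k P] [FiniteDimensional k Q] (hP : P' ≤ P) (hQ : Q' ≤ Q) :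
    Module.finrank k (↥(P ⊓ B.orthogonal Q') ⧸
        (P' ⊓ B.orthogonal Q' ⊔ P ⊓ B.orthogonal Q).comap (P ⊓ B.orthogonal Q').subtype) =
      Module.finrank k (↥(Q ⊓ B.orthogonal P') ⧸
        (Q' ⊓ B.orthogonal P' ⊔ Q ⊓ B.orthogonal P).comap (Q ⊓ B.orthogonal P').subtype) := by
  have : FiniteDimensional k P' := Submodule.finiteDimensional_of_le hP
  have : FiniteDimensional k Q' := Submodule.finiteDimensional_of_le hQ
  have hdimP := finrank_inf_quotient_sup_add hP (LinearMap.BilinForm.orthogonal_le (B := B) hQ)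
  have hdimQ := finrank_inf_quotient_sup_add hQ (LinearMap.BilinForm.orthogonal_le (B := B) hP)
  have hPQ := finrank_inf_orthogonal_add_finrank hB P Q
  have hPQ' := finrank_inf_orthogonal_add_finrank hB P Q'
  have hP'Q := finrank_inf_orthogonal_add_finrank hB P' Q
  have hP'Q' := finrank_inf_orthogonal_add_finrank hB P' Q'
  lia

end Orthogonal

theorem exists_smul_mem_torsionBySet_of_isNilpotent {R M : Type*} [CommRing R] [AddCommGroup M]
    [Module R M] {I : Ideal R} (hI : IsNilpotent I) {x : M} (hx : x ≠ 0) :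
    ∃ a : R, a • x ∈ Submodule.torsionBySet R M (I : Set R) ∧ a • x ≠ 0 := by
  obtain ⟨n, hn⟩ := hI
  have hann : ∀ a ∈ I ^ n, a • x = 0 := fun a ha ↦ by
    rw [hn, Ideal.zero_eq_bot, Ideal.mem_bot] at ha
    rw [ha, zero_smul]
  clear hn
  induction n generalizing x with
  | zero => exact absurd (by simpa using hann 1 (by simp)) hx
  | succ n ih =>
    by_cases htor : ∀ b ∈ I, b • x = 0
    · exact ⟨1, by simpa [Submodule.mem_torsionBySet_iff] using htor, by simpa using hx⟩
    · push Not at htor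
      obtain ⟨b, hb, hbx⟩ := htor
      obtain ⟨a, ha, hne⟩ := ih hbx fun a ha ↦ by
        rw [← mul_smul]
        exact hann _ (pow_succ I n ▸ Ideal.mul_mem_mul ha hb)
      exact ⟨a * b, by rwa [mul_smul], by rwa [mul_smul]⟩

theorem exists_dual_forall_ne_zero_of_finrank_eq_one {k V : Type*} [Field k] [AddCommGroup V]
    [Module k V] {S : Submodule k V} (hS : Module.finrank k S = 1) :
    ∃ φ : Module.Dual k V, ∀ x ∈ S, x ≠ 0 → φ x ≠ 0 := by
  obtain ⟨s, hs, hspan⟩ := finrank_eq_one_iff'.mp hS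
  obtain ⟨φ, hφ⟩ := Module.Projective.exists_dual_ne_zero k (Submodule.coe_eq_zero.not.mpr hs)
  refine ⟨φ, fun x hxS hx hφx ↦ ?_⟩
  obtain ⟨c, hc⟩ := hspan ⟨x, hxS⟩
  have hcx : c • (s : V) = x := congrArg Subtype.val hc
  have hc0 : c = 0 := by simpa [← hcx, hφ] using hφx
  exact hx (by rw [← hcx, hc0, zero_smul])

section MulForm

variable {k A : Type*} [Field k] [CommRing A] [Algebra k A]

/-- The bilinear form `(a, b) ↦ φ (a * b)` attached to a linear functional `φ` on an algebra; when
it is nondegenerate, `φ` is a Frobenius form, and a finite local algebra has such a `φ` exactly when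
it is Gorenstein. -/
def mulForm (φ : Module.Dual k A) : LinearMap.BilinForm k A :=
  (LinearMap.mul k A).compr₂ φ

theorem mulForm_apply (φ : Module.Dual k A) (a b : A) : mulForm φ a b = φ (a * b) := rfl

theorem isRefl_mulForm (φ : Module.Dual k A) : (mulForm φ).IsRefl := fun a b h ↦ by
  rwa [mulForm_apply, mul_comm]

theorem exists_nondegenerate_mulForm {J : Ideal A} (hJ : IsNilpotent J)
    (hsoc : Module.finrank k
      ((Submodule.torsionBySet A A (J : Set A)).restrictScalars k) = 1) :
    ∃ φ : Module.Dual k A, (mulForm φ).Nondegenerate := by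
  obtain ⟨φ, hφ⟩ := exists_dual_forall_ne_zero_of_finrank_eq_one hsoc
  refine ⟨φ, (isRefl_mulForm φ).nondegenerate_iff_separatingLeft.mpr fun x hx ↦ ?_⟩
  by_contra hne
  obtain ⟨a, ha, ha0⟩ := exists_smul_mem_torsionBySet_of_isNilpotent hJ hne
  refine hφ _ ha ha0 ?_
  rw [smul_eq_mul, mul_comm, ← mulForm_apply, hx]

variable {φ : Module.Dual k A}

theorem orthogonal_mulForm_restrictScalars (hφ : (mulForm φ).Nondegenerate) (I : Ideal A) :
    (mulForm φ).orthogonal (I.restrictScalars k) =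
      (Submodule.torsionBySet A A (I : Set A)).restrictScalars k := by
  ext x
  rw [LinearMap.BilinForm.mem_orthogonal_iff, Submodule.restrictScalars_mem,
    Submodule.mem_torsionBySet_iff]
  constructor
  · rintro hx ⟨b, hb⟩
    refine hφ.1 _ fun c ↦ ?_
    have hcb : φ (c * b * x) = 0 := hx (c * b) (I.mul_mem_left c hb)
    rwa [mulForm_apply, smul_eq_mul, mul_comm, ← mul_assoc]
  · intro hx b hb
    have hbx : b * x = 0 := hx ⟨b, hb⟩
    rw [mulForm_apply, hbx, map_zero]

theorem restrictScalars_iaA (hφ : (mulForm φ).Nondegenerate) (J : Ideal A) (m : ℕ) (n : ℤ) :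
    (iaA J m n).restrictScalars k =
      (J ^ m).restrictScalars k ⊓ (mulForm φ).orthogonal ((J ^ n.toNat).restrictScalars k) := by
  rw [iaA, Submodule.restrictScalars_inf, orthogonal_mulForm_restrictScalars hφ]

theorem iaQdim_natCast_add_one (hφ : (mulForm φ).Nondegenerate) (J : Ideal A) (m n : ℕ) :
    let P (i : ℕ) : Submodule k A := (J ^ i).restrictScalars k
    let N (i : ℕ) : Submodule k A := (mulForm φ).orthogonal (P i)
    iaQdim k J m (n + 1) = Module.finrank k (↥(P m ⊓ N (n + 1)) ⧸
      (P (m + 1) ⊓ N (n + 1) ⊔ P m ⊓ N n).comap (P m ⊓ N (n + 1)).subtype) := by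
  rw [iaQdim, add_sub_cancel_right, ← Nat.cast_add_one, subquotDim, Submodule.restrictScalars_sup,
    restrictScalars_iaA hφ, restrictScalars_iaA hφ, restrictScalars_iaA hφ]
  rfl

theorem iaQdim_comm [FiniteDimensional k A] (hφ : (mulForm φ).Nondegenerate) (J : Ideal A)
    (m n : ℕ) : iaQdim k J m (n + 1) = iaQdim k J n (m + 1) := by
  have hpow (i : ℕ) : (J ^ (i + 1)).restrictScalars k ≤ (J ^ i).restrictScalars k :=
    Ideal.pow_le_pow_right i.le_succ
  rw [iaQdim_natCast_add_one hφ, iaQdim_natCast_add_one hφ]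
  exact finrank_inf_orthogonal_quotient_comm (isRefl_mulForm φ) (hpow m) (hpow n)

theorem iaDelta_symm [FiniteDimensional k A] (hφ : (mulForm φ).Nondegenerate) (J : Ideal A)
    {j s t : ℕ} (hst : s + t ≤ j) : iaDelta k J j s t = iaDelta k J j s (j - s - t) := by
  obtain ⟨u, rfl⟩ := Nat.exists_eq_add_of_le hst
  have hu : s + t + u - s - t = u := by lia
  rw [hu, iaDelta, iaDelta, if_pos (by lia), if_pos (by lia)]
  convert iaQdim_comm hφ J t u using 2 <;> push_cast <;> ring

theorem deformations_stmt12_general [FiniteDimensional k A] (hφ : (mulForm φ).Nondegenerate)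
    (J : Ideal A) (j : ℕ) :
    (∀ m n : ℕ, 1 ≤ n → iaQdim k J m n = iaQdim k J (n - 1) (m + 1)) ∧
    (∀ s t : ℕ, s + t ≤ j → iaDelta k J j s t = iaDelta k J j s (j - s - t)) := by
  refine ⟨fun m n hn ↦ ?_, fun _ _ hst ↦ iaDelta_symm hφ J hst⟩
  obtain ⟨n, rfl⟩ := Nat.exists_eq_add_of_le' hn
  simpa using iaQdim_comm hφ J m n

end MulForm

/-- **Iarrobino symmetry.** Let `(A, 𝔪)` be a finite local Gorenstein
`k`-algebra of socle degree `j` (the largest `j` with `𝔪^j ≠ 0`). Then for all `m ≥ 0`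
and `n ≥ 1`, `dim_k Q_{m,n} = dim_k Q_{n-1,m+1}`; equivalently, the rows of the Hilbert
function decomposition satisfy `Δ_s(t) = Δ_s((j-s)-t)`, i.e. each `Δ_s` is symmetric
about `(j-s)/2`. -/
theorem deformations_stmt12 {k A : Type*} [Field k]
    [CommRing A] [Algebra k A] [IsLocalRing A] [FiniteDimensional k A]
    -- the residue field A/𝔪 is k
    (hres : Function.Bijective (algebraMap k (IsLocalRing.ResidueField A)))
    -- the socle soc(A) has k-dimension 1 (A is Gorenstein)
    (hsoc : Module.finrank k
      ↥((Submodule.torsionBySet A A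
          ((IsLocalRing.maximalIdeal A : Ideal A) : Set A)).restrictScalars k) = 1)
    -- j is the socle degree of A
    (j : ℕ) (hj : IsLocalRing.maximalIdeal A ^ j ≠ ⊥)
    (hj' : IsLocalRing.maximalIdeal A ^ (j + 1) = ⊥) :
    (∀ m n : ℕ, 1 ≤ n →
      iaQdim k (IsLocalRing.maximalIdeal A) m (n : ℤ) =
        iaQdim k (IsLocalRing.maximalIdeal A) (n - 1) ((m : ℤ) + 1)) ∧
    (∀ s t : ℕ, s ≤ j → s + t ≤ j →
      iaDelta k (IsLocalRing.maximalIdeal A) j s t =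
        iaDelta k (IsLocalRing.maximalIdeal A) j s (j - s - t)) := by
  obtain ⟨φ, hφ⟩ := exists_nondegenerate_mulForm ⟨j + 1, hj'⟩ hsoc
  exact (deformations_stmt12_general hφ _ j).imp_right fun hΔ s t _ ↦ hΔ s t
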